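/- Let G be a graph and H an attachment set of even size h. Then η(G) ≤ η(altan(G,H)) ≤ η(G) + 2, i.e., the nullity of the altan exceeds the nullity of the parent by 0, 1 or 2. -/

import Mathlib

/-
Ordering the rows of the adjacency matrix of the altan as `V, y, x` and its columns as `V, x, y`
makes it block triangular with square diagonal blocks `A`, `Cᵀ`, `C`, where `A` is the adjacency
matrix of `G` and `C` is the biadjacency matrix of the rim cycle `x₁ y₁ x₂ y₂ ⋯`. Each of the last
two blocks adds at least `rank C` and at most `h` to the rank of `A`, so the nullity grows by at
most `2 (h - rank C)`. Deleting one row and one column turns the cycle into a path and `C` into a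
triangular matrix with unit diagonal, whence `rank C ≥ h - 1`.
-/

open scoped Classical

/-- The nullity of a graph: dimension of the kernel of its real adjacency matrix. -/
noncomputable def nullity {V : Type*} [Fintype V] (G : SimpleGraph V) : ℕ :=
  letI := Classical.decEq V
  letI := Classical.decRel G.Adj
  Module.finrank ℝ ↥(LinearMap.ker (Matrix.toLin' (G.adjMatrix ℝ)))

/-- `q` is a kernel eigenvector of `G`: the sum of `q` over each neighbourhood is `0`. -/
def IsKernelVector {V : Type*} [Fintype V] (G : SimpleGraph V) (q : V → ℝ) : Prop :=
  ∀ v : V, ∑ u : V, (if G.Adj v u then q u else 0) = 0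

/-- Underlying relation of the altan construction: vertices are `V ⊕ (Fin h ⊕ Fin h)`,
where `Sum.inr (Sum.inl i)` is `x_{i+1}` and `Sum.inr (Sum.inr i)` is `y_{i+1}`
(0-indexed versions of the 1-indexed `x_i, y_i`). -/
def altanRel {V : Type*} {h : ℕ} [NeZero h] (G : SimpleGraph V) (H : Fin h → V) :
    (V ⊕ (Fin h ⊕ Fin h)) → (V ⊕ (Fin h ⊕ Fin h)) → Prop
  | Sum.inl u, Sum.inl w => G.Adj u w
  | Sum.inl u, Sum.inr (Sum.inl i) => u = H i
  | Sum.inr (Sum.inl i), Sum.inr (Sum.inr j) => j = i ∨ i = j + 1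
  | _, _ => False

/-- The altan of `(G, H)`. -/
def altan {V : Type*} {h : ℕ} [NeZero h] (G : SimpleGraph V) (H : Fin h → V) :
    SimpleGraph (V ⊕ (Fin h ⊕ Fin h)) :=
  SimpleGraph.fromRel (altanRel G H)

/-- The special vector: `s(y_i) = (-1)^i` (1-indexed), `0` elsewhere. -/
def specialVector (V : Type*) (h : ℕ) : (V ⊕ (Fin h ⊕ Fin h)) → ℝ
  | Sum.inr (Sum.inr j) => (-1 : ℝ) ^ ((j : ℕ) + 1)
  | _ => 0

/-- The induced attachment set `H' = (y_1, ..., y_h)` of the altan. -/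
def inducedAttachment (V : Type*) (h : ℕ) : Fin h → (V ⊕ (Fin h ⊕ Fin h)) :=
  fun i => Sum.inr (Sum.inr i)

section BlockTriangular

open Matrix Module

variable {K l m n o : Type*} [Field K] [Fintype m] [Fintype o]

theorem finrank_map_add_finrank_inf_ker {E F : Type*} [AddCommGroup E] [Module K E]
    [AddCommGroup F] [Module K F] (f : E →ₗ[K] F) (N : Submodule K E) [FiniteDimensional K N] :
    finrank K (N.map f) + finrank K (N ⊓ LinearMap.ker f : Submodule K E) = finrank K N := by
  rw [← LinearMap.finrank_range_add_finrank_ker (f.domRestrict N), LinearMap.range_domRestrict,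
    LinearMap.ker_domRestrict, ← Submodule.map_comap_subtype, Submodule.finrank_map_subtype_eq]

theorem ker_mulVecLin_fromRows {R : Type*} [CommSemiring R] (A : Matrix l m R)
    (B : Matrix n m R) :
    LinearMap.ker (fromRows A B).mulVecLin =
      LinearMap.ker A.mulVecLin ⊓ LinearMap.ker B.mulVecLin := by
  ext v
  simp [fromRows_mulVec, Sum.elim_eq_iff, ← Sum.elim_zero_zero]

theorem rank_add_finrank_ker_mulVecLin (A : Matrix l m K) :
    A.rank + finrank K (LinearMap.ker A.mulVecLin) = Fintype.card m :=
  A.mulVecLin.finrank_range_add_finrank_ker.trans (finrank_pi K)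

theorem rank_fromRows_eq_rank_add_finrank_map_ker (A : Matrix l m K) (B : Matrix n m K) :
    (fromRows A B).rank = A.rank + finrank K ((LinearMap.ker A.mulVecLin).map B.mulVecLin) := by
  have h_fromRows := rank_add_finrank_ker_mulVecLin (fromRows A B)
  have h_A := rank_add_finrank_ker_mulVecLin A
  have h_map := finrank_map_add_finrank_inf_ker B.mulVecLin (LinearMap.ker A.mulVecLin)
  rw [ker_mulVecLin_fromRows] at h_fromRows
  omega

theorem rank_fromCols_zero {R : Type*} [CommSemiring R] [StrongRankCondition R]
    (A : Matrix l m R) : (fromCols A (0 : Matrix l o R)).rank = A.rank := by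
  have h_mul : fromCols A (0 : Matrix l o R) = A * fromCols (1 : Matrix m m R) 0 := by
    rw [mul_fromCols, Matrix.mul_one, Matrix.mul_zero]
  have h_sub : A = (fromCols A (0 : Matrix l o R)).submatrix id Sum.inl := rfl
  refine le_antisymm (h_mul ▸ rank_mul_le_left _ _) ?_
  conv_lhs => rw [h_sub]
  exact rank_submatrix_le _ _ _

theorem rank_fromBlocks_zero₁₂_le [Fintype n] (A : Matrix l m K) (C : Matrix n m K)
    (D : Matrix n o K) : (fromBlocks A 0 C D).rank ≤ A.rank + Fintype.card n := by
  rw [← fromRows_fromCols_eq_fromBlocks, rank_fromRows_eq_rank_add_finrank_map_ker,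
    rank_fromCols_zero]
  gcongr
  exact (Submodule.finrank_le _).trans_eq (finrank_pi K)

theorem rank_add_rank_le_rank_fromBlocks_zero₁₂ (A : Matrix l m K) (C : Matrix n m K)
    (D : Matrix n o K) : A.rank + D.rank ≤ (fromBlocks A 0 C D).rank := by
  rw [← fromRows_fromCols_eq_fromBlocks, rank_fromRows_eq_rank_add_finrank_map_ker,
    rank_fromCols_zero]
  gcongr
  refine Submodule.finrank_mono ?_
  rintro _ ⟨w, rfl⟩
  exact ⟨Sum.elim 0 w, by simp, by simp⟩

theorem rank_fromBlocks_zero₂₁_le [Finite l] [Finite n] (A : Matrix l m K) (B : Matrix l o K)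
    (D : Matrix n o K) : (fromBlocks A B 0 D).rank ≤ A.rank + Fintype.card o := by
  have := Fintype.ofFinite l
  have := Fintype.ofFinite n
  rw [← rank_transpose, fromBlocks_transpose, ← rank_transpose A]
  exact rank_fromBlocks_zero₁₂_le Aᵀ Bᵀ Dᵀ

theorem rank_add_rank_le_rank_fromBlocks_zero₂₁ (A : Matrix l m K) (B : Matrix l o K)
    (D : Matrix n o K) : A.rank + D.rank ≤ (fromBlocks A B 0 D).rank := by
  rw [← rank_submatrix _ (Equiv.sumComm n l) (Equiv.sumComm o m), Equiv.sumComm_apply,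
    Equiv.sumComm_apply, fromBlocks_submatrix_sum_swap_sum_swap, add_comm]
  exact rank_add_rank_le_rank_fromBlocks_zero₁₂ D B A

end BlockTriangular

section Altan

open Matrix

variable (R : Type*) {V : Type*} {h : ℕ}

/-- The incidence matrix of an attachment tuple: column `i` is the indicator of the vertex `H i`,
so that it records the edges joining `G` to the vertices `x` of the altan. -/
noncomputable def attachmentMatrix [Zero R] [One R] (H : Fin h → V) : Matrix V (Fin h) R :=
  of fun v i => if v = H i then 1 else 0

variable (h) in
/-- The biadjacency matrix of the rim cycle of an altan, with rows indexed by the vertices `x` and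
columns by the vertices `y`. For `h = 1` its only entry is `1`, as the two edges coincide. -/
noncomputable def rimMatrix [Zero R] [One R] [NeZero h] : Matrix (Fin h) (Fin h) R :=
  of fun i j => if j = i ∨ i = j + 1 then 1 else 0

theorem altan_adj_inl_inl [NeZero h] (G : SimpleGraph V) (H : Fin h → V) (v w : V) :
    (altan G H).Adj (Sum.inl v) (Sum.inl w) ↔ G.Adj v w := by
  simpa [altan, altanRel, G.adj_comm w v] using G.ne_of_adj

theorem submatrix_adjMatrix_altan [Zero R] [One R] [NeZero h] (G : SimpleGraph V)
    (H : Fin h → V) :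
    ((altan G H).adjMatrix R).submatrix
        ((Equiv.sumAssoc V (Fin h) (Fin h)).trans (.sumCongr (.refl V) (.sumComm _ _)))
        (Equiv.sumAssoc V (Fin h) (Fin h)) =
      fromBlocks (fromBlocks (G.adjMatrix R) (attachmentMatrix R H) 0 (rimMatrix R h)ᵀ) 0
        (fromCols (attachmentMatrix R H)ᵀ 0) (rimMatrix R h) := by
  ext ((v | j) | i) ((w | i') | j')
  case inl.inl.inl.inl => simp [altan_adj_inl_inl]
  all_goals simp [altan, altanRel, attachmentMatrix, rimMatrix]

variable (h) in
theorem le_rank_rimMatrix_add_one [CommRing R] [Nontrivial R] [NeZero h] :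
    h ≤ (rimMatrix R h).rank + 1 := by
  obtain ⟨n, rfl⟩ := Nat.exists_eq_succ_of_ne_zero (NeZero.ne h)
  let P := (rimMatrix R (n + 1)).submatrix Fin.succ Fin.castSucc
  have h_upper : P.IsUpperTriangular := by
    intro i j (hij : j < i)
    have h_ne : j.castSucc ≠ i.succ := (Fin.castSucc_lt_succ_iff.2 hij.le).ne
    simp [P, rimMatrix, h_ne, hij.ne']
  have h_det : P.det = 1 := by
    rw [det_of_isUpperTriangular h_upper]
    simp [P, rimMatrix]
  calc n + 1 = P.rank + 1 := by
        rw [rank_of_isUnit P (P.isUnit_iff_isUnit_det.2 (h_det ▸ isUnit_one)), Fintype.card_fin]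
    _ ≤ (rimMatrix R (n + 1)).rank + 1 := by gcongr; exact rank_submatrix_le _ _ _

variable [Fintype V]

theorem rank_adjMatrix_altan [CommSemiring R] [NeZero h] (G : SimpleGraph V) (H : Fin h → V) :
    ((altan G H).adjMatrix R).rank =
      (fromBlocks (fromBlocks (G.adjMatrix R) (attachmentMatrix R H) 0 (rimMatrix R h)ᵀ) 0
        (fromCols (attachmentMatrix R H)ᵀ 0) (rimMatrix R h)).rank := by
  rw [← submatrix_adjMatrix_altan, rank_submatrix]

variable (K : Type*) [Field K]

theorem rank_adjMatrix_altan_le [NeZero h] (G : SimpleGraph V) (H : Fin h → V) :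
    ((altan G H).adjMatrix K).rank ≤ (G.adjMatrix K).rank + 2 * h := by
  rw [rank_adjMatrix_altan]
  have h_outer := rank_fromBlocks_zero₁₂_le
    (fromBlocks (G.adjMatrix K) (attachmentMatrix K H) 0 (rimMatrix K h)ᵀ)
    (fromCols (attachmentMatrix K H)ᵀ 0) (rimMatrix K h)
  have h_inner := rank_fromBlocks_zero₂₁_le (G.adjMatrix K) (attachmentMatrix K H)
    (rimMatrix K h)ᵀ
  rw [Fintype.card_fin] at h_outer h_inner
  lia

theorem rank_adjMatrix_add_le_rank_adjMatrix_altan [NeZero h] (G : SimpleGraph V)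
    (H : Fin h → V) :
    (G.adjMatrix K).rank + 2 * h ≤ ((altan G H).adjMatrix K).rank + 2 := by
  rw [rank_adjMatrix_altan]
  have h_outer := rank_add_rank_le_rank_fromBlocks_zero₁₂
    (fromBlocks (G.adjMatrix K) (attachmentMatrix K H) 0 (rimMatrix K h)ᵀ)
    (fromCols (attachmentMatrix K H)ᵀ 0) (rimMatrix K h)
  have h_inner := rank_add_rank_le_rank_fromBlocks_zero₂₁ (G.adjMatrix K)
    (attachmentMatrix K H) (rimMatrix K h)ᵀ
  have h_rim := le_rank_rimMatrix_add_one K h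
  rw [rank_transpose] at h_inner
  lia

/-- The nullity of a graph over a field `K`: the dimension of the kernel of its adjacency matrix
with entries in `K`. -/
noncomputable def nullityOver (G : SimpleGraph V) : ℕ :=
  Module.finrank K (LinearMap.ker (toLin' (G.adjMatrix K)))

theorem rank_adjMatrix_add_nullityOver (G : SimpleGraph V) :
    (G.adjMatrix K).rank + nullityOver K G = Fintype.card V :=
  rank_add_finrank_ker_mulVecLin (G.adjMatrix K)

end Altan

theorem stmt4_general (K : Type*) [Field K] {V : Type*} [Fintype V] {h : ℕ} [NeZero h]
    (G : SimpleGraph V) (H : Fin h → V) :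
    nullityOver K G ≤ nullityOver K (altan G H) ∧
      nullityOver K (altan G H) ≤ nullityOver K G + 2 := by
  have h_upper := rank_adjMatrix_altan_le K G H
  have h_lower := rank_adjMatrix_add_le_rank_adjMatrix_altan K G H
  have h_G := rank_adjMatrix_add_nullityOver K G
  have h_altan := rank_adjMatrix_add_nullityOver K (altan G H)
  rw [Fintype.card_sum, Fintype.card_sum, Fintype.card_fin] at h_altan
  lia

/-- for even attachment size, η(G) ≤ η(altan(G,H)) ≤ η(G) + 2. -/
theorem stmt4 {V : Type*} [Fintype V] {h : ℕ} [NeZero h] (hh : 2 ≤ h) (heven : Even h)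
    (G : SimpleGraph V) (H : Fin h → V) :
    nullity G ≤ nullity (altan G H) ∧ nullity (altan G H) ≤ nullity G + 2 :=
  stmt4_general ℝ G H
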